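/- arXiv:2207.07430 — 8 statements merged into one kernel-verified Lean document; each statement's English description precedes it below -/
import Mathlib

section
/- Let σ₁, σ₂, σ₃ be the Pauli matrices and γ₁ = (iσ₂) ⊗ σ₁, γ₂ = (iσ₂) ⊗ σ₂, γ₃ = (iσ₂) ⊗ σ₃, γ₄ = (iσ₁) ⊗ I₂ be 4×4 complex matrices (Kronecker products). Let β₁, β₂, c be real with c ≠ 0, set a = β₁·γ₁γ₂ + β₂·γ₃γ₄, and suppose (β₁ + β₂)² = c² or (β₁ − β₂)² = c². Then: (i) if β₁β₂ ≠ 0, the kernel of a − i·c·I₄ is a 1-dimensional complex subspace of ℂ⁴; (ii) if β₂ = 0 and β₁² = c², the kernel of a − i·c·I₄ is 2-dimensional. -/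
open Matrix Complex
open scoped Kronecker

noncomputable section

/-- Pauli matrix σ₁. -/
def σ1 : Matrix (Fin 2) (Fin 2) ℂ := !![0, 1; 1, 0]
/-- Pauli matrix σ₂. -/
def σ2 : Matrix (Fin 2) (Fin 2) ℂ := !![0, -I; I, 0]
/-- Pauli matrix σ₃. -/
def σ3 : Matrix (Fin 2) (Fin 2) ℂ := !![1, 0; 0, -1]

/-- γ₁ = (iσ₂) ⊗ σ₁. -/
def γ1 : Matrix (Fin 2 × Fin 2) (Fin 2 × Fin 2) ℂ := (I • σ2) ⊗ₖ σ1
/-- γ₂ = (iσ₂) ⊗ σ₂. -/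
def γ2 : Matrix (Fin 2 × Fin 2) (Fin 2 × Fin 2) ℂ := (I • σ2) ⊗ₖ σ2
/-- γ₃ = (iσ₂) ⊗ σ₃. -/
def γ3 : Matrix (Fin 2 × Fin 2) (Fin 2 × Fin 2) ℂ := (I • σ2) ⊗ₖ σ3
/-- γ₄ = (iσ₁) ⊗ I₂. -/
def γ4 : Matrix (Fin 2 × Fin 2) (Fin 2 × Fin 2) ℂ := (I • σ1) ⊗ₖ (1 : Matrix (Fin 2) (Fin 2) ℂ)

lemma aux_matrix (β₁ β₂ c : ℝ) :
    (β₁ : ℂ) • (γ1 * γ2) + (β₂ : ℂ) • (γ3 * γ4) - (I * c) • 1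
      = Matrix.diagonal (fun p : Fin 2 × Fin 2 =>
        I * (((!![-β₁ + β₂, β₁ - β₂; -β₁ - β₂, β₁ + β₂] : Matrix (Fin 2) (Fin 2) ℝ) p.1 p.2
          - c : ℝ) : ℂ)) := by
  have hI : I ^ 3 = -I := by rw [pow_succ, I_sq]; ring
  ext ⟨i, j⟩ ⟨k, l⟩
  fin_cases i <;> fin_cases j <;> fin_cases k <;> fin_cases l <;>
    simp [γ1, γ2, γ3, γ4, σ1, σ2, σ3, Matrix.mul_apply, Fintype.sum_prod_type,
      Matrix.one_apply] <;>
    ring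

lemma aux_ker (w : Fin 2 × Fin 2 → ℂ) :
    Module.finrank ℂ (LinearMap.ker (Matrix.diagonal w).mulVecLin)
      = ∑ i, if w i = 0 then 1 else 0 := by
  classical
  have h1 := LinearMap.finrank_range_add_finrank_ker (Matrix.diagonal w).mulVecLin
  have h2 := Matrix.rank_diagonal w
  rw [Matrix.rank] at h2
  have h3 := Fintype.card_subtype_compl (fun i => w i = 0)
  have h4 := Fintype.card_subtype_le (fun i => w i = 0)
  have h5 : Fintype.card {i // w i = 0} = ∑ i, if w i = 0 then 1 else 0 := by
    rw [Fintype.card_subtype, Finset.card_filter]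
  rw [← h5]
  simp only [Module.finrank_fintype_fun_eq_card] at h1
  have h6 : Fintype.card {i // w i ≠ 0} = Fintype.card {i // ¬ w i = 0} := rfl
  omega

/-- Dimension of the kernel of `a − icI₄` with `a = β₁ γ₁γ₂ + β₂ γ₃γ₄`, when
`(β₁ ± β₂)² = c²`: it is 1-dimensional if `β₁β₂ ≠ 0` and 2-dimensional if `β₂ = 0`
and `β₁² = c²`. -/
theorem stmt_2 (β₁ β₂ c : ℝ) (hc : c ≠ 0)
    (hsusy : (β₁ + β₂) ^ 2 = c ^ 2 ∨ (β₁ - β₂) ^ 2 = c ^ 2) :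
    (β₁ * β₂ ≠ 0 →
      Module.finrank ℂ
        (LinearMap.ker ((β₁ : ℂ) • (γ1 * γ2) + (β₂ : ℂ) • (γ3 * γ4)
          - (I * c) • 1).mulVecLin) = 1) ∧
    (β₂ = 0 → β₁ ^ 2 = c ^ 2 →
      Module.finrank ℂ
        (LinearMap.ker ((β₁ : ℂ) • (γ1 * γ2) + (β₂ : ℂ) • (γ3 * γ4)
          - (I * c) • 1).mulVecLin) = 2) := by
  rw [aux_matrix, aux_ker]
  simp only [Fintype.sum_prod_type, Fin.sum_univ_two, mul_eq_zero, I_ne_zero, false_or,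
    ofReal_eq_zero]
  simp only [Matrix.of_apply, Matrix.cons_val', Matrix.cons_val_zero, Matrix.cons_val_one,
    Matrix.cons_val_fin_one]
  refine ⟨fun h => ?_, fun h h' => ?_⟩
  · have hb1 : β₁ ≠ 0 := left_ne_zero_of_mul h
    have hb2 : β₂ ≠ 0 := right_ne_zero_of_mul h
    clear h
    rcases hsusy with hs | hs <;> rcases sq_eq_sq_iff_eq_or_eq_neg.mp hs with hs' | hs' <;>
      clear hs <;>
      by_cases h1 : -β₁ + β₂ - c = 0 <;> by_cases h2 : β₁ - β₂ - c = 0 <;>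
      by_cases h3 : -β₁ - β₂ - c = 0 <;> by_cases h4 : β₁ + β₂ - c = 0 <;> first
        | (simp [h1, h2, h3, h4]; done)
        | (exfalso; first
            | exact h1 (by linarith) | exact h2 (by linarith)
            | exact h3 (by linarith) | exact h4 (by linarith)
            | exact hc (by linarith) | exact hb1 (by linarith) | exact hb2 (by linarith))
  · clear hsusy
    rcases sq_eq_sq_iff_eq_or_eq_neg.mp h' with hs' | hs' <;> clear h' <;>
      by_cases h1 : -β₁ + β₂ - c = 0 <;> by_cases h2 : β₁ - β₂ - c = 0 <;>
      by_cases h3 : -β₁ - β₂ - c = 0 <;> by_cases h4 : β₁ + β₂ - c = 0 <;> first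
        | (simp [h1, h2, h3, h4]; done)
        | (exfalso; first
            | exact h1 (by linarith) | exact h2 (by linarith)
            | exact h3 (by linarith) | exact h4 (by linarith)
            | exact hc (by linarith))

end
end

section
/- Let R > 0 and β < 0. Then: (i) for every x ∈ ℝ⁵ with x₁² + x₂² − x₃² − x₄² − x₅² = R², one has 2β((x₁+x₄)² + (x₂+x₃)²) − β²(R² + x₅²) < −β²R²; and (ii) the inequality 1 + 2β((x₁+x₄)² + (x₂+x₃)²) − β²(R² + x₅²) < 0 holds for every such x if and only if β²R² ≥ 1. -/
/-- On the AdS quadric `x₁² + x₂² − x₃² − x₄² − x₅² = R²` with `β < 0`: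
(i) the λ₈-part `2β((x₁+x₄)² + (x₂+x₃)²) − β²(R² + x₅²)` of the squared norm of the
Killing vector `∂_y + λ₈` is everywhere strictly less than `−β²R²`; and
(ii) the squared norm `1 + 2β((x₁+x₄)² + (x₂+x₃)²) − β²(R² + x₅²)` is everywhere
negative if and only if `β²R² ≥ 1`. -/
theorem stmt_4 (R β : ℝ) (hR : 0 < R) (hβ : β < 0) :
    (∀ x₁ x₂ x₃ x₄ x₅ : ℝ, x₁ ^ 2 + x₂ ^ 2 - x₃ ^ 2 - x₄ ^ 2 - x₅ ^ 2 = R ^ 2 →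
      2 * β * ((x₁ + x₄) ^ 2 + (x₂ + x₃) ^ 2) - β ^ 2 * (R ^ 2 + x₅ ^ 2)
        < -(β ^ 2 * R ^ 2)) ∧
    ((∀ x₁ x₂ x₃ x₄ x₅ : ℝ, x₁ ^ 2 + x₂ ^ 2 - x₃ ^ 2 - x₄ ^ 2 - x₅ ^ 2 = R ^ 2 →
      1 + 2 * β * ((x₁ + x₄) ^ 2 + (x₂ + x₃) ^ 2) - β ^ 2 * (R ^ 2 + x₅ ^ 2) < 0) ↔
      β ^ 2 * R ^ 2 ≥ 1) := by
  have key : ∀ x₁ x₂ x₃ x₄ x₅ : ℝ, x₁ ^ 2 + x₂ ^ 2 - x₃ ^ 2 - x₄ ^ 2 - x₅ ^ 2 = R ^ 2 →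
      2 * β * ((x₁ + x₄) ^ 2 + (x₂ + x₃) ^ 2) - β ^ 2 * (R ^ 2 + x₅ ^ 2)
        < -(β ^ 2 * R ^ 2) := by
    intro x₁ x₂ x₃ x₄ x₅ h
    have hpos : 0 < (x₁ + x₄) ^ 2 + (x₂ + x₃) ^ 2 := by
      by_contra hn
      have h1 : x₁ + x₄ = 0 := by
        apply pow_eq_zero_iff (two_ne_zero) |>.1
        nlinarith [sq_nonneg (x₁ + x₄), sq_nonneg (x₂ + x₃)]
      have h2 : x₂ + x₃ = 0 := by
        apply pow_eq_zero_iff (two_ne_zero) |>.1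
        nlinarith [sq_nonneg (x₁ + x₄), sq_nonneg (x₂ + x₃)]
      obtain rfl : x₁ = -x₄ := by linarith
      obtain rfl : x₂ = -x₃ := by linarith
      nlinarith [sq_nonneg x₅, pow_pos hR 2]
    have h3 : β * ((x₁ + x₄) ^ 2 + (x₂ + x₃) ^ 2) < 0 := mul_neg_of_neg_of_pos hβ hpos
    nlinarith [sq_nonneg (β * x₅)]
  refine ⟨key, fun H => ?_, fun H x₁ x₂ x₃ x₄ x₅ h => ?_⟩
  · by_contra hn
    have hc : 0 < (1 - β ^ 2 * R ^ 2) / (-2 * β) := by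
      apply div_pos <;> linarith
    obtain ⟨t, ht, hts⟩ : ∃ t : ℝ, 0 < t ∧ t ^ 2 = (1 - β ^ 2 * R ^ 2) / (-2 * β) :=
      ⟨_, Real.sqrt_pos.2 hc, Real.sq_sqrt hc.le⟩
    have hb : -2 * β ≠ 0 := by linarith
    rw [eq_div_iff hb] at hts
    have h := H ((t + R ^ 2 / t) / 2) 0 0 ((t - R ^ 2 / t) / 2) 0 (by field_simp; ring)
    have e : (t + R ^ 2 / t) / 2 + (t - R ^ 2 / t) / 2 = t := by ring
    rw [e] at h
    nlinarith
  · have := key x₁ x₂ x₃ x₄ x₅ h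
    linarith
end

section
/- Let σ₁, σ₂, σ₃ be the Pauli matrices and define the 4×4 complex matrices γ₂ = σ₃ ⊗ I₂ and γ_y = (iσ₂) ⊗ σ₁ (Kronecker products). For real β and c with c ≠ 0: the matrix c·I₄ + (β/√2)·γ₂γ_y has nonzero kernel if and only if β² = 2c², and in that case its kernel is a 2-dimensional complex subspace of ℂ⁴. -/
open Matrix Complex
open scoped Kronecker

noncomputable section

/-- γ₂ = σ₃ ⊗ I₂ (timelike). -/
def γ2' : Matrix (Fin 2 × Fin 2) (Fin 2 × Fin 2) ℂ := σ3 ⊗ₖ (1 : Matrix (Fin 2) (Fin 2) ℂ)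
/-- γ_y = (iσ₂) ⊗ σ₁. -/
def γy : Matrix (Fin 2 × Fin 2) (Fin 2 × Fin 2) ℂ := (I • σ2) ⊗ₖ σ1
/-- γ₃ = (iσ₂) ⊗ σ₂. -/
def γ3' : Matrix (Fin 2 × Fin 2) (Fin 2 × Fin 2) ℂ := (I • σ2) ⊗ₖ σ2
/-- γ₄ = (iσ₂) ⊗ σ₃. -/
def γ4' : Matrix (Fin 2 × Fin 2) (Fin 2 × Fin 2) ℂ := (I • σ2) ⊗ₖ σ3

lemma mem_ker_aux (c b : ℂ) (v : Fin 2 × Fin 2 → ℂ) :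
    v ∈ LinearMap.ker (c • 1 + b • (γ2' * γy)).mulVecLin ↔
      (c * v (0, 0) + b * v (1, 1) = 0 ∧ c * v (0, 1) + b * v (1, 0) = 0) ∧
      (c * v (1, 0) + b * v (0, 1) = 0 ∧ c * v (1, 1) + b * v (0, 0) = 0) := by
  have h : γ2' * γy = σ1 ⊗ₖ σ1 := by
    unfold γ2' γy
    rw [← Matrix.mul_kronecker_mul]
    congr 1
    · ext i j
      fin_cases i <;> fin_cases j <;> simp [σ1, σ2, σ3, Matrix.mul_apply, Fin.sum_univ_two]
    · simp
  rw [h, LinearMap.mem_ker, Matrix.mulVecLin_apply, Matrix.add_mulVec, Matrix.smul_mulVec,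
    Matrix.smul_mulVec, Matrix.one_mulVec, funext_iff]
  simp [Prod.forall, Fin.forall_fin_two, Matrix.mulVec, dotProduct, Fintype.sum_prod_type,
    Fin.sum_univ_two, σ1]

lemma finrank_aux (c b : ℂ) (hc : c ≠ 0) (h : b ^ 2 = c ^ 2) :
    Module.finrank ℂ (LinearMap.ker (c • 1 + b • (γ2' * γy)).mulVecLin) = 2 := by
  let e : LinearMap.ker (c • 1 + b • (γ2' * γy)).mulVecLin →ₗ[ℂ] (Fin 2 → ℂ) :=
    { toFun := fun v j => v.1 (0, j)
      map_add' := fun _ _ => rfl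
      map_smul' := fun _ _ => rfl }
  have he : Function.Bijective e := by
    constructor
    · rw [← LinearMap.ker_eq_bot, LinearMap.ker_eq_bot']
      rintro ⟨v, hv⟩ h0
      obtain ⟨-, h3, h4⟩ := (mem_ker_aux c b v).1 hv
      have a0 : v (0, 0) = 0 := congrFun h0 0
      have a1 : v (0, 1) = 0 := congrFun h0 1
      have a2 : v (1, 0) = 0 := by simpa [a1, hc] using h3
      have a3 : v (1, 1) = 0 := by simpa [a0, hc] using h4
      ext ⟨i, j⟩
      fin_cases i <;> fin_cases j <;> simpa
    · intro w
      refine ⟨⟨fun p => if p.1 = 0 then w p.2 else -(b / c) * w (1 - p.2), ?_⟩, ?_⟩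
      · rw [mem_ker_aux]
        simp only [↓reduceIte, one_ne_zero, sub_self, sub_zero]
        refine ⟨⟨?_, ?_⟩, ?_, ?_⟩ <;> field_simp <;> grind
      · ext j
        simp [e]
  rw [(LinearEquiv.ofBijective e he).finrank_eq]
  simp

lemma ker_aux (c b : ℂ) (h : b ^ 2 ≠ c ^ 2) :
    LinearMap.ker (c • 1 + b • (γ2' * γy)).mulVecLin = ⊥ := by
  rw [eq_bot_iff]
  intro v hv
  obtain ⟨⟨h1, h2⟩, h3, h4⟩ := (mem_ker_aux c b v).1 hv
  have hd : b ^ 2 - c ^ 2 ≠ 0 := sub_ne_zero.2 h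
  have a0 : v (0, 0) = 0 := mul_left_cancel₀ hd (by linear_combination b * h4 - c * h1)
  have a1 : v (0, 1) = 0 := mul_left_cancel₀ hd (by linear_combination b * h3 - c * h2)
  have a2 : v (1, 0) = 0 := mul_left_cancel₀ hd (by linear_combination b * h2 - c * h3)
  have a3 : v (1, 1) = 0 := mul_left_cancel₀ hd (by linear_combination b * h1 - c * h4)
  rw [Submodule.mem_bot]
  ext ⟨i, j⟩
  fin_cases i <;> fin_cases j <;> simpa

/-- The matrix `cI₄ + (β/√2) γ₂γ_y` has nonzero kernel iff `β² = 2c²`, in which case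
its kernel is 2-dimensional (the half-BPS case λ₁ for `ℝ × AdS₄`). -/
theorem stmt_7 (β c : ℝ) (hc : c ≠ 0) :
    (LinearMap.ker ((c : ℂ) • 1 + ((β / Real.sqrt 2 : ℝ) : ℂ) • (γ2' * γy)).mulVecLin ≠ ⊥ ↔
      β ^ 2 = 2 * c ^ 2) ∧
    (β ^ 2 = 2 * c ^ 2 →
      Module.finrank ℂ
        (LinearMap.ker ((c : ℂ) • 1 + ((β / Real.sqrt 2 : ℝ) : ℂ) • (γ2' * γy)).mulVecLin)
        = 2) := by
  have key : ((β / Real.sqrt 2 : ℝ) : ℂ) ^ 2 = (c : ℂ) ^ 2 ↔ β ^ 2 = 2 * c ^ 2 := by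
    norm_cast
    rw [div_pow, Real.sq_sqrt (by norm_num), div_eq_iff (by norm_num), mul_comm]
  have hc' : (c : ℂ) ≠ 0 := by exact_mod_cast hc
  have fr := fun h => finrank_aux (c : ℂ) _ hc' (key.2 h)
  refine ⟨⟨fun h => ?_, fun h hb => ?_⟩, fr⟩
  · by_contra hn
    exact h (ker_aux _ _ (fun h' => hn (key.1 h')))
  · have := fr h
    rw [hb, finrank_bot] at this
    omega

end
end

section
/- Let σ₁, σ₂, σ₃ be the Pauli matrices and define the 4×4 complex matrices γ₂ = σ₃ ⊗ I₂, γ_y = (iσ₂) ⊗ σ₁, γ₃ = (iσ₂) ⊗ σ₂, γ₄ = (iσ₂) ⊗ σ₃ (Kronecker products). Let β₁, β₂, c be real with c ≠ 0 and β₁β₂ ≠ 0, and set M = β₂·γ₃γ₄ + i·c·I₄ + i·(β₁/√2)·γ₂γ_y. Then M has nonzero kernel if and only if 2c² = (β₁ + √2β₂)² or 2c² = (β₁ − √2β₂)², and in that case the kernel of M is 1-dimensional. -/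
open Matrix Complex
open scoped Kronecker

noncomputable section

/-- Componentwise description of the kernel. -/
lemma mem_ker_iff (β₂ c b : ℝ) (x : Fin 2 × Fin 2 → ℂ) :
    x ∈ LinearMap.ker ((β₂ : ℂ) • (γ3' * γ4') + (I * c) • 1
        + (I * (b : ℂ)) • (γ2' * γy)).mulVecLin ↔
      (c * x (0,0) - β₂ * x (0,1) + b * x (1,1) = 0 ∧
       c * x (0,1) - β₂ * x (0,0) + b * x (1,0) = 0 ∧
       c * x (1,0) - β₂ * x (1,1) + b * x (0,1) = 0 ∧
       c * x (1,1) - β₂ * x (1,0) + b * x (0,0) = 0) := by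
  have h34 : γ3' * γ4' = (1 : Matrix (Fin 2) (Fin 2) ℂ) ⊗ₖ ((-I) • σ1) := by
    unfold γ3' γ4'
    rw [← Matrix.mul_kronecker_mul]
    ext ⟨i, j⟩ ⟨k, l⟩
    fin_cases i <;> fin_cases j <;> fin_cases k <;> fin_cases l <;>
      simp [σ1, σ2, σ3, Matrix.mul_apply, Fin.sum_univ_two]
  have h2y : γ2' * γy = σ1 ⊗ₖ σ1 := by
    unfold γ2' γy
    rw [← Matrix.mul_kronecker_mul]
    ext ⟨i, j⟩ ⟨k, l⟩
    fin_cases i <;> fin_cases j <;> fin_cases k <;> fin_cases l <;>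
      simp [σ1, σ2, σ3, Matrix.mul_apply, Fin.sum_univ_two]
  rw [h34, h2y, LinearMap.mem_ker, funext_iff]
  simp only [Prod.forall, Fin.forall_fin_two, Matrix.mulVecLin_apply, Matrix.mulVec, dotProduct,
    Fintype.sum_prod_type, Fin.sum_univ_two]
  simp [σ1, Matrix.one_apply]
  have key : ∀ z w : ℂ, w = I * z → (w = 0 ↔ z = 0) := by
    rintro z w rfl
    simp
  rw [and_assoc]
  refine and_congr (key _ _ (by ring)) (and_congr (key _ _ (by ring))
    (and_congr (key _ _ (by ring)) (key _ _ (by ring))))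

/-- The projection on the eigenvector with signs `s`, `t`. -/
lemma proj_eq_zero (β₂ c b s t : ℝ) (hs : s ^ 2 = 1) (ht : t ^ 2 = 1)
    (hl : c - β₂ * s + b * s * t ≠ 0) (x : Fin 2 × Fin 2 → ℂ)
    (hx : x ∈ LinearMap.ker ((β₂ : ℂ) • (γ3' * γ4') + (I * c) • 1
        + (I * (b : ℂ)) • (γ2' * γy)).mulVecLin) :
    x (0,0) + s * x (0,1) + t * x (1,0) + s * t * x (1,1) = 0 := by
  rw [mem_ker_iff] at hx
  obtain ⟨h1, h2, h3, h4⟩ := hx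
  have hs' : (s : ℂ) ^ 2 = 1 := by exact_mod_cast hs
  have ht' : (t : ℂ) ^ 2 = 1 := by exact_mod_cast ht
  have hl' : (c - β₂ * s + b * s * t : ℂ) ≠ 0 := by exact_mod_cast hl
  refine (mul_eq_zero.mp ?_).resolve_left hl'
  linear_combination h1 + s * h2 + t * h3 + s * t * h4
    + (-β₂ * x (0,1) - β₂ * t * x (1,1) + b * t * x (0,1)  + b * t ^ 2 * x (1,1)) * hs'
    + (b * s * x (1,0) + b * x (1,1)) * ht'

lemma ker_eq_span (β₂ c b s t : ℝ) (hs : s ^ 2 = 1) (ht : t ^ 2 = 1)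
    (hc : c ≠ 0) (hb : b ≠ 0) (hβ₂ : β₂ ≠ 0) (hl : c - β₂ * s + b * s * t = 0) :
    Module.finrank ℂ (LinearMap.ker ((β₂ : ℂ) • (γ3' * γ4') + (I * c) • 1
        + (I * (b : ℂ)) • (γ2' * γy)).mulVecLin) = 1 := by
  have hs0 : s ≠ 0 := by rintro rfl; norm_num at hs
  have ht0 : t ≠ 0 := by rintro rfl; norm_num at ht
  have hs' : (s : ℂ) ^ 2 = 1 := by exact_mod_cast hs
  have ht' : (t : ℂ) ^ 2 = 1 := by exact_mod_cast ht
  have hl' : (c - β₂ * s + b * s * t : ℂ) = 0 := by exact_mod_cast hl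
  let w : Fin 2 × Fin 2 → ℂ := fun p => (if p.2 = 0 then 1 else (s : ℂ)) *
    (if p.1 = 0 then 1 else (t : ℂ))
  have w00 : w (0,0) = 1 := by simp [w]
  have w01 : w (0,1) = s := by simp [w]
  have w10 : w (1,0) = t := by simp [w]
  have w11 : w (1,1) = s * t := by simp [w]
  have hw : w ≠ 0 := fun h => by
    have := congrFun h (0,0)
    rw [w00] at this
    simp at this
  rw [show LinearMap.ker ((β₂ : ℂ) • (γ3' * γ4') + (I * c) • 1
        + (I * (b : ℂ)) • (γ2' * γy)).mulVecLin = Submodule.span ℂ {w} from ?_]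
  · exact finrank_span_singleton hw
  ext x
  rw [Submodule.mem_span_singleton]
  constructor
  · intro hx
    have e1 := proj_eq_zero β₂ c b (-s) t (by simpa using hs) ht (by
      intro h; apply hc; linarith) x hx
    have e2 := proj_eq_zero β₂ c b s (-t) hs (by simpa using ht) (by
      intro h
      have : b * s * t = 0 := by linarith
      simp_all) x hx
    have e3 := proj_eq_zero β₂ c b (-s) (-t) (by simpa using hs) (by simpa using ht) (by
      intro h
      have : β₂ * s = 0 := by linarith
      simp_all) x hx
    push_cast at e1 e2 e3
    refine ⟨x (0,0), ?_⟩
    ext ⟨i, j⟩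
    fin_cases i <;> fin_cases j <;>
      simp only [Fin.zero_eta, Fin.mk_one, Pi.smul_apply, smul_eq_mul, w00, w01, w10, w11]
    · ring
    · linear_combination (s / 2) * e1 + (s / 2) * e3 + x (0,1) * hs'
    · linear_combination (t / 2) * e2 + (t / 2) * e3 + x (1,0) * ht'
    · linear_combination (s * t / 2) * e1 + (s * t / 2) * e2
        + (s ^ 2 * x (1,1)) * ht' + x (1,1) * hs'
  · rintro ⟨a, rfl⟩
    rw [mem_ker_iff]
    simp only [Pi.smul_apply, smul_eq_mul, w00, w01, w10, w11]
    refine ⟨?_, ?_, ?_, ?_⟩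
    · linear_combination a * hl'
    · linear_combination a * s * hl' + (a * β₂ - a * b * t) * hs'
    · linear_combination a * t * hl' - a * b * s * ht'
    · linear_combination a * s * t * hl' + (a * β₂ * t - a * b * t ^ 2) * hs' - a * b * ht'

lemma ker_eq_bot (β₂ c b : ℝ)
    (h : ∀ s t : ℝ, s ^ 2 = 1 → t ^ 2 = 1 → c - β₂ * s + b * s * t ≠ 0) :
    LinearMap.ker ((β₂ : ℂ) • (γ3' * γ4') + (I * c) • 1
        + (I * (b : ℂ)) • (γ2' * γy)).mulVecLin = ⊥ := by
  rw [Submodule.eq_bot_iff]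
  intro x hx
  have e : ∀ s t : ℝ, s ^ 2 = 1 → t ^ 2 = 1 → _ := fun s t hs ht =>
    proj_eq_zero β₂ c b s t hs ht (h s t hs ht) x hx
  have e1 := e 1 1 (by norm_num) (by norm_num)
  have e2 := e 1 (-1) (by norm_num) (by norm_num)
  have e3 := e (-1) 1 (by norm_num) (by norm_num)
  have e4 := e (-1) (-1) (by norm_num) (by norm_num)
  push_cast at e1 e2 e3 e4
  ext ⟨i, j⟩
  fin_cases i <;> fin_cases j <;> simp only [Fin.zero_eta, Fin.mk_one, Pi.zero_apply]
  · linear_combination (e1 + e2 + e3 + e4) / 4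
  · linear_combination (e1 + e2 - e3 - e4) / 4
  · linear_combination (e1 - e2 + e3 - e4) / 4
  · linear_combination (e1 - e2 - e3 + e4) / 4

/-- For `M = β₂ γ₃γ₄ + icI₄ + i(β₁/√2) γ₂γ_y` with `c ≠ 0` and `β₁β₂ ≠ 0`: `M` has
nonzero kernel iff `2c² = (β₁ + √2 β₂)²` or `2c² = (β₁ − √2 β₂)²`, and in that case
the kernel is 1-dimensional (quarter-BPS case λ₁₀ for `ℝ × AdS₄`). -/
theorem stmt_8 (β₁ β₂ c : ℝ) (hc : c ≠ 0) (hβ : β₁ * β₂ ≠ 0) :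
    (LinearMap.ker ((β₂ : ℂ) • (γ3' * γ4') + (I * c) • 1
        + (I * ((β₁ / Real.sqrt 2 : ℝ) : ℂ)) • (γ2' * γy)).mulVecLin ≠ ⊥ ↔
      2 * c ^ 2 = (β₁ + Real.sqrt 2 * β₂) ^ 2 ∨ 2 * c ^ 2 = (β₁ - Real.sqrt 2 * β₂) ^ 2) ∧
    (LinearMap.ker ((β₂ : ℂ) • (γ3' * γ4') + (I * c) • 1
        + (I * ((β₁ / Real.sqrt 2 : ℝ) : ℂ)) • (γ2' * γy)).mulVecLin ≠ ⊥ →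
      Module.finrank ℂ
        (LinearMap.ker ((β₂ : ℂ) • (γ3' * γ4') + (I * c) • 1
          + (I * ((β₁ / Real.sqrt 2 : ℝ) : ℂ)) • (γ2' * γy)).mulVecLin) = 1) := by
  have hβ₁ : β₁ ≠ 0 := left_ne_zero_of_mul hβ
  have hβ₂ : β₂ ≠ 0 := right_ne_zero_of_mul hβ
  have h2 : Real.sqrt 2 ≠ 0 := by positivity
  have hsq : Real.sqrt 2 ^ 2 = 2 := Real.sq_sqrt (by norm_num)
  obtain ⟨b, hb⟩ : ∃ b, b = β₁ / Real.sqrt 2 := ⟨_, rfl⟩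
  have hβb : β₁ = Real.sqrt 2 * b := by rw [hb]; field_simp
  have hb0 : b ≠ 0 := fun h => hβ₁ (by rw [hβb, h, mul_zero])
  rw [← hb]
  have A : (∃ s t : ℝ, s ^ 2 = 1 ∧ t ^ 2 = 1 ∧ c - β₂ * s + b * s * t = 0) ↔
      (2 * c ^ 2 = (β₁ + Real.sqrt 2 * β₂) ^ 2 ∨ 2 * c ^ 2 = (β₁ - Real.sqrt 2 * β₂) ^ 2) := by
    have p1 : (β₁ + Real.sqrt 2 * β₂) ^ 2 = 2 * (b + β₂) ^ 2 := by
      rw [hβb]; linear_combination (b + β₂) ^ 2 * hsq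
    have p2 : (β₁ - Real.sqrt 2 * β₂) ^ 2 = 2 * (b - β₂) ^ 2 := by
      rw [hβb]; linear_combination (b - β₂) ^ 2 * hsq
    rw [p1, p2]
    constructor
    · rintro ⟨s, t, hs, ht, h⟩
      have hc' : c = s * (β₂ - b * t) := by linarith
      rcases eq_or_eq_neg_of_sq_eq_sq t 1 (by rw [ht]; norm_num) with rfl | rfl
      · right; rw [hc']; linear_combination 2 * (b - β₂) ^ 2 * hs
      · left; rw [hc']; linear_combination 2 * (b + β₂) ^ 2 * hs
    · rintro (h | h)
      · rcases sq_eq_sq_iff_eq_or_eq_neg.mp (mul_left_cancel₀ two_ne_zero h) with h | h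
        · exact ⟨1, -1, by norm_num, by norm_num, by rw [h]; ring⟩
        · exact ⟨-1, -1, by norm_num, by norm_num, by rw [h]; ring⟩
      · rcases sq_eq_sq_iff_eq_or_eq_neg.mp (mul_left_cancel₀ two_ne_zero h) with h | h
        · exact ⟨-1, 1, by norm_num, by norm_num, by rw [h]; ring⟩
        · exact ⟨1, 1, by norm_num, by norm_num, by rw [h]; ring⟩
  have B : LinearMap.ker ((β₂ : ℂ) • (γ3' * γ4') + (I * c) • 1
        + (I * (b : ℂ)) • (γ2' * γy)).mulVecLin ≠ ⊥ →
      ∃ s t : ℝ, s ^ 2 = 1 ∧ t ^ 2 = 1 ∧ c - β₂ * s + b * s * t = 0 := by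
    intro h
    by_contra hn
    exact h (ker_eq_bot β₂ c b fun s t hs ht h0 => hn ⟨s, t, hs, ht, h0⟩)
  rw [← A]
  refine ⟨⟨B, ?_⟩, fun h => ?_⟩
  · rintro ⟨s, t, hs, ht, h⟩ h0
    have := ker_eq_span β₂ c b s t hs ht hc hb0 hβ₂ h
    rw [h0, finrank_bot] at this
    exact zero_ne_one this
  · obtain ⟨s, t, hs, ht, h⟩ := B h
    exact ker_eq_span β₂ c b s t hs ht hc hb0 hβ₂ h

end
end

section
/- Let σ₁, σ₂, σ₃ be the Pauli matrices and define the 4×4 complex matrices γ₂ = σ₃ ⊗ I₂, γ_y = (iσ₂) ⊗ σ₁, γ₃ = (iσ₂) ⊗ σ₂, γ₄ = (iσ₂) ⊗ σ₃ (Kronecker products). For c > 0, set a = γ₃γ₄ − γ₂γ₄ and b = c·I₄ − (1/√2)(γ₂ + γ₃)γ_y. Then a + ib or a − ib has nonzero kernel if and only if c = 2^{3/4}; and when c = 2^{3/4}, the complex dimensions of ker(a + ib) and ker(a − ib) sum to 2. -/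
open Matrix Complex
open scoped Kronecker

noncomputable section

/-- The operator `a + e i b` with `1/√2` replaced by `s`. -/
def opM (c s e : ℂ) : Matrix (Fin 2 × Fin 2) (Fin 2 × Fin 2) ℂ :=
  (γ3' * γ4' - γ2' * γ4') + (e * I) • (c • 1 - s • ((γ2' + γ3') * γy))

lemma opM_ker (c s e : ℂ) (v : Fin 2 × Fin 2 → ℂ) :
    v ∈ LinearMap.ker (opM c s e).mulVecLin ↔
      ((I*e*c + e*s) * v (0,0) - I * v (0,1) - I*e*s * v (1,1) - v (1,0) = 0 ∧
       (I*e*c - e*s) * v (0,1) - I * v (0,0) - I*e*s * v (1,0) + v (1,1) = 0) ∧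
      ((I*e*c + e*s) * v (1,0) - I * v (1,1) - I*e*s * v (0,1) - v (0,0) = 0 ∧
       (I*e*c - e*s) * v (1,1) - I * v (1,0) - I*e*s * v (0,0) + v (0,1) = 0) := by
  have hI : I * I = -1 := I_mul_I
  rw [LinearMap.mem_ker, Matrix.mulVecLin_apply, funext_iff, Prod.forall]
  simp only [Fin.forall_fin_two]
  simp [opM, γ2', γ3', γ4', γy, σ1, σ2, σ3, Matrix.mulVec, dotProduct, Fintype.sum_prod_type,
    Matrix.mul_apply, Matrix.one_apply, Fin.sum_univ_two]
  refine and_congr (and_congr ?_ ?_) (and_congr ?_ ?_)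
  all_goals
    apply Eq.congr_left
    grind

lemma solve2 {p q r t x y : ℂ} (h1 : p * x + q * y = 0) (h2 : r * x + t * y = 0)
    (h : p * t - q * r ≠ 0) : x = 0 ∧ y = 0 := by
  constructor
  · apply (mul_eq_zero.mp (?_ : (p * t - q * r) * x = 0)).resolve_left h
    linear_combination t * h1 - q * h2
  · apply (mul_eq_zero.mp (?_ : (p * t - q * r) * y = 0)).resolve_left h
    linear_combination p * h2 - r * h1

lemma opM_anti (c s e : ℂ) (he : e * e = 1) (h : c ^ 2 + 4 * s ≠ 0) (v : Fin 2 × Fin 2 → ℂ)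
    (hv : v ∈ LinearMap.ker (opM c s e).mulVecLin) :
    v (0,0) - e * v (1,0) = 0 ∧ v (0,1) - e * v (1,1) = 0 := by
  have hI : I * I = -1 := I_mul_I
  rw [opM_ker] at hv
  obtain ⟨⟨h1, h2⟩, h3, h4⟩ := hv
  refine solve2 (p := I*e*c + e*s + e) (q := -I*(1-s)) (r := -I*(1-s)) (t := I*e*c - e*s - e)
    ?_ ?_ ?_
  · grind
  · grind
  · contrapose! h
    grind

lemma opM_sym (c s e : ℂ) (he : e * e = 1) (v : Fin 2 × Fin 2 → ℂ)
    (hv : v ∈ LinearMap.ker (opM c s e).mulVecLin) :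
    (I*e*c + e*s - e) * (v (0,0) + e * v (1,0)) + (-I*(1+s)) * (v (0,1) + e * v (1,1)) = 0 ∧
    (-I*(1+s)) * (v (0,0) + e * v (1,0)) + (I*e*c - e*s + e) * (v (0,1) + e * v (1,1)) = 0 := by
  have hI : I * I = -1 := I_mul_I
  rw [opM_ker] at hv
  obtain ⟨⟨h1, h2⟩, h3, h4⟩ := hv
  constructor
  · grind
  · grind

lemma opM_ker_bot (c s e : ℂ) (he : e * e = 1) (h : c ^ 2 + 4 * s ≠ 0) (h' : c ^ 2 - 4 * s ≠ 0) :
    LinearMap.ker (opM c s e).mulVecLin = ⊥ := by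
  have hI : I * I = -1 := I_mul_I
  rw [eq_bot_iff]
  intro v hv
  obtain ⟨a1, a2⟩ := opM_anti c s e he h v hv
  obtain ⟨b1, b2⟩ := opM_sym c s e he v hv
  obtain ⟨b1, b2⟩ := solve2 b1 b2 (by contrapose! h'; grind)
  rw [Submodule.mem_bot, funext_iff, Prod.forall]
  simp only [Fin.forall_fin_two, Pi.zero_apply]
  refine ⟨⟨?_, ?_⟩, ?_, ?_⟩ <;> grind

/-- The generator of the kernel in the critical case. -/
def genW (c s e : ℂ) : Fin 2 × Fin 2 → ℂ := fun ij =>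
  (if ij.1 = 0 then 1 else e) * (if ij.2 = 0 then I * (1 + s) else e * (I * c + s - 1))

lemma opM_finrank (c s e : ℂ) (he : e * e = 1) (h : c ^ 2 + 4 * s ≠ 0) (h' : c ^ 2 - 4 * s = 0)
    (hs : 1 + s ≠ 0) : Module.finrank ℂ (LinearMap.ker (opM c s e).mulVecLin) = 1 := by
  have hI : I * I = -1 := I_mul_I
  have hk : LinearMap.ker (opM c s e).mulVecLin = Submodule.span ℂ {genW c s e} := by
    apply le_antisymm
    · intro v hv
      obtain ⟨a1, a2⟩ := opM_anti c s e he h v hv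
      obtain ⟨b1, b2⟩ := opM_sym c s e he v hv
      rw [Submodule.mem_span_singleton]
      have hne : I * (1 + s) ≠ 0 := mul_ne_zero I_ne_zero hs
      refine ⟨v (0,0) / (I * (1 + s)), ?_⟩
      have h0 : v (0,0) = v (0,0) / (I * (1 + s)) * (I * (1 + s)) := by field_simp
      generalize v (0,0) / (I * (1 + s)) = k at *
      have h1 : v (0,1) = k * (e * (I * c + s - 1)) := by
        apply mul_left_cancel₀ hne
        linear_combination (e * (I * c + s - 1)) * h0 - (1 / 2) * (e * (I * c + s - 1)) * a1
          + (1 / 2) * (I * (1 + s)) * a2 - (1 / 2) * b1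
      rw [funext_iff, Prod.forall]
      simp only [Fin.forall_fin_two, Pi.smul_apply, genW, smul_eq_mul]
      simp
      refine ⟨⟨?_, ?_⟩, ?_, ?_⟩ <;> grind
    · rw [Submodule.span_singleton_le_iff_mem, opM_ker]
      simp [genW]
      refine ⟨⟨?_, ?_⟩, ?_, ?_⟩ <;> grind
  rw [hk]
  apply finrank_span_singleton
  intro h0
  have := congrFun h0 (0,0)
  simp [genW, hs] at this

/-- For `a = γ₃γ₄ − γ₂γ₄` and `b = cI₄ − (1/√2)(γ₂+γ₃)γ_y` with `c > 0`: one of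
`a + ib`, `a − ib` has nonzero kernel iff `c = 2^{3/4}`; and when `c = 2^{3/4}` the
dimensions of the two kernels sum to 2 (quarter-BPS case λ₆ for `ℝ × AdS₄`). -/
theorem stmt_9 (c : ℝ) (hc : 0 < c) :
    ((LinearMap.ker ((γ3' * γ4' - γ2' * γ4')
        + I • ((c : ℂ) • 1 - ((1 / Real.sqrt 2 : ℝ) : ℂ) • ((γ2' + γ3') * γy))).mulVecLin ≠ ⊥ ∨
      LinearMap.ker ((γ3' * γ4' - γ2' * γ4')
        - I • ((c : ℂ) • 1 - ((1 / Real.sqrt 2 : ℝ) : ℂ) • ((γ2' + γ3') * γy))).mulVecLin ≠ ⊥) ↔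
      c = (2 : ℝ) ^ ((3 : ℝ) / 4)) ∧
    (c = (2 : ℝ) ^ ((3 : ℝ) / 4) →
      Module.finrank ℂ
        (LinearMap.ker ((γ3' * γ4' - γ2' * γ4')
          + I • ((c : ℂ) • 1 - ((1 / Real.sqrt 2 : ℝ) : ℂ) • ((γ2' + γ3') * γy))).mulVecLin) +
      Module.finrank ℂ
        (LinearMap.ker ((γ3' * γ4' - γ2' * γ4')
          - I • ((c : ℂ) • 1 - ((1 / Real.sqrt 2 : ℝ) : ℂ) • ((γ2' + γ3') * γy))).mulVecLin)
        = 2) := by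
  obtain ⟨s, hs⟩ : ∃ s : ℝ, s = 1 / Real.sqrt 2 := ⟨_, rfl⟩
  have hs0 : 0 < s := by rw [hs]; positivity
  have hs2 : s ^ 2 = 1 / 2 := by rw [hs, div_pow, Real.sq_sqrt] <;> norm_num
  have hiff : c = (2 : ℝ) ^ ((3 : ℝ) / 4) ↔ c ^ 2 - 4 * s = 0 := by
    have h4 : ((2 : ℝ) ^ ((3 : ℝ) / 4)) ^ 4 = 8 := by
      rw [← Real.rpow_natCast, ← Real.rpow_mul (by norm_num)]
      norm_num
    have hp : (0 : ℝ) < (2 : ℝ) ^ ((3 : ℝ) / 4) := by positivity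
    have e1 : c = (2 : ℝ) ^ ((3 : ℝ) / 4) ↔ c ^ 4 = 8 := by
      rw [← h4]
      exact (pow_left_inj₀ hc.le hp.le (by norm_num)).symm
    rw [e1]
    constructor
    · intro h
      have : (c ^ 2 - 4 * s) * (c ^ 2 + 4 * s) = 0 := by linear_combination h - 16 * hs2
      exact (mul_eq_zero.mp this).resolve_right (by positivity)
    · intro h
      linear_combination (c ^ 2 + 4 * s) * h + 16 * hs2
  rw [← hs, hiff]
  have hP : (γ3' * γ4' - γ2' * γ4') + I • ((c : ℂ) • 1 - (s : ℂ) • ((γ2' + γ3') * γy))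
      = opM c s 1 := by simp [opM]
  have hM : (γ3' * γ4' - γ2' * γ4') - I • ((c : ℂ) • 1 - (s : ℂ) • ((γ2' + γ3') * γy))
      = opM c s (-1) := by rw [opM, neg_one_mul, neg_smul, sub_eq_add_neg]
  rw [hP, hM]
  have hpos : (c : ℂ) ^ 2 + 4 * s ≠ 0 := by
    have : c ^ 2 + 4 * s ≠ 0 := by positivity
    exact_mod_cast this
  have hs1 : (1 : ℂ) + s ≠ 0 := by
    have : 1 + s ≠ 0 := by positivity
    exact_mod_cast this
  have hr : c ^ 2 - 4 * s = 0 → ∀ e : ℂ, e * e = 1 →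
      Module.finrank ℂ (LinearMap.ker (opM c s e).mulVecLin) = 1 := by
    intro h e he
    exact opM_finrank c s e he hpos (by exact_mod_cast h) hs1
  refine ⟨⟨?_, ?_⟩, ?_⟩
  · intro h
    by_contra hne
    have hne' : (c : ℂ) ^ 2 - 4 * s ≠ 0 := by exact_mod_cast hne
    rcases h with h | h
    · exact h (opM_ker_bot c s 1 (by norm_num) hpos hne')
    · exact h (opM_ker_bot c s (-1) (by norm_num) hpos hne')
  · intro h
    left
    intro hb
    have := hr h 1 (by norm_num)
    rw [hb, finrank_bot] at this
    norm_num at this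
  · intro h
    rw [hr h 1 (by norm_num), hr h (-1) (by norm_num)]

end
end

section
/- Let σ₁, σ₂, σ₃ be the Pauli matrices and define the 4×4 complex matrices γ₂ = σ₃ ⊗ I₂, γ_y = (iσ₂) ⊗ σ₁, γ₃ = (iσ₂) ⊗ σ₂, γ₄ = (iσ₂) ⊗ σ₃ (Kronecker products). For c > 0 and β ∈ ℝ, set a = (1+β)·γ₃γ₄ − γ₂γ₄ and b = c·I₄ − (1/√2)(γ₃ + (1−β)γ₂)γ_y. Then a + ib or a − ib has nonzero kernel if and only if c² = β + (3/2)β² + √2·|β² − 2| or c² = β + (3/2)β² − √2·|β² − 2|. -/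
open Matrix Complex
open scoped Kronecker

noncomputable section

lemma aux_det (p t u v : ℂ) (M : Matrix (Fin 2 × Fin 2) (Fin 2 × Fin 2) ℂ)
    (w : ℂ)
    (hM : M.submatrix finProdFinEquiv.symm finProdFinEquiv.symm =
      (!![p + t, u, w, v; u, p - t, v, -w; w, v, p + t, u; v, -w, u, p - t] :
        Matrix (Fin 4) (Fin 4) ℂ)) :
    LinearMap.ker M.mulVecLin ≠ ⊥ ↔
      (p ^ 2 - (u + v) ^ 2 - (t + w) ^ 2) * (p ^ 2 - (u - v) ^ 2 - (t - w) ^ 2) = 0 := by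
  have hd : M.det =
      (p ^ 2 - (u + v) ^ 2 - (t + w) ^ 2) * (p ^ 2 - (u - v) ^ 2 - (t - w) ^ 2) := by
    rw [← Matrix.det_submatrix_equiv_self finProdFinEquiv.symm M, hM]
    simp [Matrix.det_succ_row_zero, Fin.sum_univ_succ, Fin.succAbove]
    ring
  rw [← hd, ← Matrix.exists_mulVec_eq_zero_iff, Submodule.ne_bot_iff]
  simp only [LinearMap.mem_ker, Matrix.mulVecLin_apply]
  constructor
  · rintro ⟨v, h1, h2⟩
    exact ⟨v, h2, h1⟩
  · rintro ⟨v, h1, h2⟩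
    exact ⟨v, h2, h1⟩

lemma fps (i : Fin 4) : (finProdFinEquiv.symm (i : Fin (2 * 2)) : Fin 2 × Fin 2) =
    (![(0, 0), (0, 1), (1, 0), (1, 1)] : Fin 4 → Fin 2 × Fin 2) i := by
  revert i; decide

lemma g34 : γ3' * γ4' = (1 : Matrix (Fin 2) (Fin 2) ℂ) ⊗ₖ (-I • σ1) := by
  rw [γ3', γ4', ← Matrix.mul_kronecker_mul]
  ext ⟨i, j⟩ ⟨k, l⟩
  fin_cases i <;> fin_cases j <;> fin_cases k <;> fin_cases l <;>
    simp [σ1, σ2, σ3]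

lemma g24 : γ2' * γ4' = σ1 ⊗ₖ σ3 := by
  rw [γ2', γ4', ← Matrix.mul_kronecker_mul]
  ext ⟨i, j⟩ ⟨k, l⟩
  fin_cases i <;> fin_cases j <;> fin_cases k <;> fin_cases l <;>
    simp [σ1, σ2, σ3]

lemma g3y : γ3' * γy = (1 : Matrix (Fin 2) (Fin 2) ℂ) ⊗ₖ (I • σ3) := by
  rw [γ3', γy, ← Matrix.mul_kronecker_mul]
  ext ⟨i, j⟩ ⟨k, l⟩
  fin_cases i <;> fin_cases j <;> fin_cases k <;> fin_cases l <;>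
    simp [σ1, σ2, σ3]

lemma g2y : γ2' * γy = σ1 ⊗ₖ σ1 := by
  rw [γ2', γy, ← Matrix.mul_kronecker_mul]
  ext ⟨i, j⟩ ⟨k, l⟩
  fin_cases i <;> fin_cases j <;> fin_cases k <;> fin_cases l <;>
    simp [σ1, σ2, σ3]

lemma aux_M (b k c d τ : ℂ) :
    ((b • (γ3' * γ4') - γ2' * γ4') + (τ * I) • (c • (1 : Matrix (Fin 2 × Fin 2) (Fin 2 × Fin 2) ℂ)
      - k • ((γ3' + d • γ2') * γy))).submatrix finProdFinEquiv.symm finProdFinEquiv.symm =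
      (!![τ * I * c + τ * k, -I * b, -1, -I * τ * k * d;
          -I * b, τ * I * c - τ * k, -I * τ * k * d, -(-1);
          -1, -I * τ * k * d, τ * I * c + τ * k, -I * b;
          -I * τ * k * d, -(-1), -I * b, τ * I * c - τ * k] :
        Matrix (Fin 4) (Fin 4) ℂ) := by
  have hI : I * I = -1 := I_mul_I
  rw [add_mul, smul_mul_assoc, g34, g24, g3y, g2y]
  ext i j
  rw [Matrix.submatrix_apply, fps i, fps j]
  fin_cases i <;> fin_cases j <;>
    simp [σ1, σ3, Matrix.one_apply] <;> grind

lemma aux_ker_s10 (β c τ : ℝ) (hτ : τ ^ 2 = 1) :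
    LinearMap.ker ((((1 + β : ℝ) : ℂ) • (γ3' * γ4') - γ2' * γ4')
        + ((τ : ℂ) * I) • ((c : ℂ) • 1
          - ((1 / Real.sqrt 2 : ℝ) : ℂ) • ((γ3' + ((1 - β : ℝ) : ℂ) • γ2') * γy))).mulVecLin
        ≠ ⊥ ↔
    (c ^ 2 = β + 3 / 2 * β ^ 2 + Real.sqrt 2 * |β ^ 2 - 2| ∨
      c ^ 2 = β + 3 / 2 * β ^ 2 - Real.sqrt 2 * |β ^ 2 - 2|) := by
  rw [aux_det _ _ _ _ _ _ (aux_M _ _ _ _ _)]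
  have hs : Real.sqrt 2 ^ 2 = 2 := Real.sq_sqrt (by norm_num)
  obtain ⟨k, hk⟩ : ∃ k : ℝ, k = 1 / Real.sqrt 2 := ⟨_, rfl⟩
  have hs2 : Real.sqrt 2 = 2 * k := by
    rw [hk]; field_simp; exact hs
  rw [← hk, hs2]
  have hk2 : k ^ 2 = 1 / 2 := by rw [hs2] at hs; linarith
  clear hk hs hs2
  have e : (((τ : ℂ) * I * c) ^ 2 - (-I * ((1 + β : ℝ) : ℂ) + -I * τ * k * ((1 - β : ℝ) : ℂ)) ^ 2
      - (τ * k + -1) ^ 2) * ((τ * I * c) ^ 2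
      - (-I * ((1 + β : ℝ) : ℂ) - -I * τ * k * ((1 - β : ℝ) : ℂ)) ^ 2 - (τ * k - -1) ^ 2) =
      (((c ^ 2 - (β + 3 / 2 * β ^ 2)) ^ 2 - (2 * k * |β ^ 2 - 2|) ^ 2 : ℝ) : ℂ) := by
    have hI : I ^ 2 = -1 := I_sq
    rw [mul_pow (2 * k), sq_abs]
    have hτ' : (τ : ℂ) ^ 2 = 1 := by exact_mod_cast hτ
    have hk' : (k : ℂ) ^ 2 = 1 / 2 := by rw [← Complex.ofReal_pow, hk2]; push_cast; rfl
    have h1 : ((τ : ℂ) * I * c) ^ 2 - (-I * ((1 + β : ℝ) : ℂ) + -I * τ * k * ((1 - β : ℝ) : ℂ)) ^ 2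
      - (τ * k + -1) ^ 2 = -c ^ 2 + (β + 3 / 2 * β ^ 2) + 2 * k * τ * (2 - β ^ 2) := by
      push_cast
      grind
    have h2 : ((τ : ℂ) * I * c) ^ 2 - (-I * ((1 + β : ℝ) : ℂ) - -I * τ * k * ((1 - β : ℝ) : ℂ)) ^ 2
      - (τ * k - -1) ^ 2 = -c ^ 2 + (β + 3 / 2 * β ^ 2) - 2 * k * τ * (2 - β ^ 2) := by
      push_cast
      grind
    rw [h1, h2]
    push_cast
    linear_combination (-(4 * (k : ℂ) ^ 2 * (2 - β ^ 2) ^ 2)) * hτ'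
  rw [e, Complex.ofReal_eq_zero, sub_eq_zero, sq_eq_sq_iff_eq_or_eq_neg]
  constructor <;> rintro (h | h)
  · left; linarith
  · right; linarith
  · left; linarith
  · right; linarith

/-- For `a = (1+β) γ₃γ₄ − γ₂γ₄` and `b = cI₄ − (1/√2)(γ₃ + (1−β)γ₂)γ_y` with `c > 0`:
one of `a + ib`, `a − ib` has nonzero kernel iff
`c² = β + (3/2)β² + √2|β² − 2|` or `c² = β + (3/2)β² − √2|β² − 2|`
(the case λ₈ for `ℝ × AdS₄`). -/
theorem stmt_10 (β c : ℝ) (hc : 0 < c) :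
    (LinearMap.ker ((((1 + β : ℝ) : ℂ) • (γ3' * γ4') - γ2' * γ4')
        + I • ((c : ℂ) • 1
          - ((1 / Real.sqrt 2 : ℝ) : ℂ) • ((γ3' + ((1 - β : ℝ) : ℂ) • γ2') * γy))).mulVecLin
        ≠ ⊥ ∨
      LinearMap.ker ((((1 + β : ℝ) : ℂ) • (γ3' * γ4') - γ2' * γ4')
        - I • ((c : ℂ) • 1
          - ((1 / Real.sqrt 2 : ℝ) : ℂ) • ((γ3' + ((1 - β : ℝ) : ℂ) • γ2') * γy))).mulVecLin
        ≠ ⊥) ↔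
    (c ^ 2 = β + 3 / 2 * β ^ 2 + Real.sqrt 2 * |β ^ 2 - 2| ∨
      c ^ 2 = β + 3 / 2 * β ^ 2 - Real.sqrt 2 * |β ^ 2 - 2|) := by
  have h1 := aux_ker_s10 β c 1 (by norm_num)
  have h2 := aux_ker_s10 β c (-1) (by norm_num)
  rw [Complex.ofReal_one, one_mul] at h1
  rw [Complex.ofReal_neg, Complex.ofReal_one, neg_one_mul, neg_smul, ← sub_eq_add_neg] at h2
  rw [h1, h2, or_self]

end
end

section
/- Let σ₁, σ₂, σ₃ be the Pauli matrices and define the 4×4 complex matrices γ₀ = σ₃ ⊗ I₂, γ₁ = (iσ₂) ⊗ σ₁, γ₂ = (iσ₂) ⊗ σ₂, γ₄ = (iσ₁) ⊗ I₂ (Kronecker products), and set γ₊ = (γ₄ + γ₀)/√2, γ₋ = (γ₄ − γ₀)/√2. For b ∈ ℝ, let M(b) = i·(3·I₄ + γ₋γ₊) + 2b·γ₁γ₂. Then M(b) has nonzero kernel if and only if 4b² = 1 or 4b² = 9, and in each of these cases the kernel of M(b) is a 1-dimensional complex subspace of ℂ⁴. -/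
open Matrix Complex
open scoped Kronecker

noncomputable section

/-- γ₀ = σ₃ ⊗ I₂ (timelike). -/
def γ0 : Matrix (Fin 2 × Fin 2) (Fin 2 × Fin 2) ℂ := σ3 ⊗ₖ (1 : Matrix (Fin 2) (Fin 2) ℂ)
/-- γ₊ = (γ₄ + γ₀)/√2. -/
def γplus : Matrix (Fin 2 × Fin 2) (Fin 2 × Fin 2) ℂ :=
  ((Real.sqrt 2 : ℝ) : ℂ)⁻¹ • (γ4 + γ0)
/-- γ₋ = (γ₄ − γ₀)/√2. -/
def γminus : Matrix (Fin 2 × Fin 2) (Fin 2 × Fin 2) ℂ :=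
  ((Real.sqrt 2 : ℝ) : ℂ)⁻¹ • (γ4 - γ0)

/-- The matrix `M(b)`. -/
def MM (b : ℝ) : Matrix (Fin 2 × Fin 2) (Fin 2 × Fin 2) ℂ :=
  I • ((3 : ℂ) • (1 : Matrix (Fin 2 × Fin 2) (Fin 2 × Fin 2) ℂ)
        + γminus * γplus) + ((2 * b : ℝ) : ℂ) • (γ1 * γ2)

theorem gmp : γminus * γplus =
    (σ2 ⊗ₖ (1 : Matrix (Fin 2) (Fin 2) ℂ)) - 1 := by
  have h2 : (((Real.sqrt 2 : ℝ) : ℂ)⁻¹ * ((Real.sqrt 2 : ℝ) : ℂ)⁻¹) = 1 / 2 := by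
    rw [← mul_inv, ← Complex.ofReal_mul, Real.mul_self_sqrt (by norm_num)]
    norm_num
  unfold γminus γplus
  rw [smul_mul_smul_comm, h2]
  ext ⟨i, j⟩ ⟨k, l⟩
  fin_cases i <;> fin_cases j <;> fin_cases k <;> fin_cases l <;>
    simp [γ4, γ0, σ1, σ2, σ3, Matrix.mul_apply, Fintype.sum_prod_type, Matrix.one_apply] <;>
    ring_nf

theorem g12 : γ1 * γ2 =
    (-I) • ((1 : Matrix (Fin 2) (Fin 2) ℂ) ⊗ₖ σ3) := by
  ext ⟨i, j⟩ ⟨k, l⟩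
  fin_cases i <;> fin_cases j <;> fin_cases k <;> fin_cases l <;>
    simp [γ1, γ2, σ1, σ2, σ3, Matrix.mul_apply, Fintype.sum_prod_type, Matrix.one_apply]

theorem mem_ker (b : ℝ) (v : Fin 2 × Fin 2 → ℂ) :
    v ∈ LinearMap.ker (MM b).mulVecLin ↔
      ((2 - 2 * b) * v (0, 0) = I * v (1, 0) ∧ (2 - 2 * b) * v (1, 0) = - I * v (0, 0)) ∧
      ((2 + 2 * b) * v (0, 1) = I * v (1, 1) ∧ (2 + 2 * b) * v (1, 1) = - I * v (0, 1)) := by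
  have hI : I * I = -1 := Complex.I_mul_I
  rw [LinearMap.mem_ker, Matrix.mulVecLin_apply, MM, gmp, g12, funext_iff]
  simp only [Prod.forall, Fin.forall_fin_two]
  simp [σ2, σ3, Matrix.mulVec, dotProduct, Fintype.sum_prod_type, Matrix.one_apply]
  constructor
  · rintro ⟨⟨h1, h2⟩, h3, h4⟩
    refine ⟨⟨?_, ?_⟩, ?_, ?_⟩
    · linear_combination (-I) * h1 + (2 * v (0,0) - 2 * b * v (0,0)) * hI
    · linear_combination (-I) * h3 + (2 * v (1,0) - 2 * b * v (1,0)) * hI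
    · linear_combination (-I) * h2 + (2 * v (0,1) + 2 * b * v (0,1)) * hI
    · linear_combination (-I) * h4 + (2 * v (1,1) + 2 * b * v (1,1)) * hI
  · rintro ⟨⟨h1, h2⟩, h3, h4⟩
    refine ⟨⟨?_, ?_⟩, ?_, ?_⟩
    · linear_combination I * h1 + v (1, 0) * hI
    · linear_combination I * h3 + v (1, 1) * hI
    · linear_combination I * h2 - v (0, 0) * hI
    · linear_combination I * h4 - v (0, 1) * hI

theorem block_zero (c x y : ℂ) (hc : c ^ 2 ≠ 1) (h1 : c * x = I * y) (h2 : c * y = -I * x) :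
    x = 0 ∧ y = 0 := by
  have hI : I * I = -1 := Complex.I_mul_I
  have hc' : c ^ 2 - 1 ≠ 0 := sub_ne_zero.mpr hc
  constructor
  · apply (mul_eq_zero.mp (?_ : (c ^ 2 - 1) * x = 0)).resolve_left hc'
    linear_combination c * h1 + I * h2 - x * hI
  · apply (mul_eq_zero.mp (?_ : (c ^ 2 - 1) * y = 0)).resolve_left hc'
    linear_combination c * h2 - I * h1 - y * hI

theorem ker_bot (b : ℝ) (h1 : 4 * b ^ 2 ≠ 1) (h9 : 4 * b ^ 2 ≠ 9) :
    LinearMap.ker (MM b).mulVecLin = ⊥ := by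
  rw [Submodule.eq_bot_iff]
  intro v hv
  rw [mem_ker] at hv
  obtain ⟨⟨e1, e2⟩, e3, e4⟩ := hv
  have hm : (2 - 2 * (b : ℂ)) ^ 2 ≠ 1 := by
    intro h
    have h' : (2 - 2 * b) ^ 2 = 1 := by exact_mod_cast h
    rcases (sq_eq_sq_iff_eq_or_eq_neg.mp (h'.trans (one_pow 2).symm)) with h | h
    · apply h1; have : b = 1 / 2 := by linarith
      rw [this]; norm_num
    · apply h9; have : b = 3 / 2 := by linarith
      rw [this]; norm_num
  have hp : (2 + 2 * (b : ℂ)) ^ 2 ≠ 1 := by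
    intro h
    have h' : (2 + 2 * b) ^ 2 = 1 := by exact_mod_cast h
    rcases (sq_eq_sq_iff_eq_or_eq_neg.mp (h'.trans (one_pow 2).symm)) with h | h
    · apply h1; have : b = -1 / 2 := by linarith
      rw [this]; norm_num
    · apply h9; have : b = -3 / 2 := by linarith
      rw [this]; norm_num
  obtain ⟨a1, a2⟩ := block_zero _ _ _ hm e1 e2
  obtain ⟨a3, a4⟩ := block_zero _ _ _ hp e3 e4
  ext ⟨i, j⟩
  fin_cases i <;> fin_cases j <;> simp [a1, a2, a3, a4]

theorem finrank_minus (b : ℝ) (s : ℂ) (hs : s ^ 2 = 1) (hb : 2 - 2 * (b : ℂ) = s)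
    (hp : (2 + 2 * (b : ℂ)) ^ 2 ≠ 1) :
    Module.finrank ℂ (LinearMap.ker (MM b).mulVecLin) = 1 := by
  have hI : I * I = -1 := Complex.I_mul_I
  have key : LinearMap.ker (MM b).mulVecLin =
      Submodule.span ℂ {fun p : Fin 2 × Fin 2 =>
        if p.2 = 0 then (if p.1 = 0 then (1 : ℂ) else -I * s) else 0} := by
    ext v
    rw [mem_ker, Submodule.mem_span_singleton, hb]
    constructor
    · rintro ⟨⟨e1, e2⟩, e3, e4⟩
      obtain ⟨a3, a4⟩ := block_zero _ _ _ hp e3 e4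
      refine ⟨v (0, 0), ?_⟩
      ext ⟨i, j⟩
      fin_cases i <;> fin_cases j <;> simp [a3, a4]
      linear_combination -I * e1 - v (1, 0) * hI
    · rintro ⟨a, rfl⟩
      simp
      constructor
      · linear_combination a * s * hI
      · linear_combination (a * I) * hs
  rw [key]
  apply finrank_span_singleton
  intro h
  simpa using congrFun h (0, 0)

theorem finrank_plus (b : ℝ) (s : ℂ) (hs : s ^ 2 = 1) (hb : 2 + 2 * (b : ℂ) = s)
    (hp : (2 - 2 * (b : ℂ)) ^ 2 ≠ 1) :
    Module.finrank ℂ (LinearMap.ker (MM b).mulVecLin) = 1 := by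
  have hI : I * I = -1 := Complex.I_mul_I
  have key : LinearMap.ker (MM b).mulVecLin =
      Submodule.span ℂ {fun p : Fin 2 × Fin 2 =>
        if p.2 = 1 then (if p.1 = 0 then (1 : ℂ) else -I * s) else 0} := by
    ext v
    rw [mem_ker, Submodule.mem_span_singleton, hb]
    constructor
    · rintro ⟨⟨e1, e2⟩, e3, e4⟩
      obtain ⟨a3, a4⟩ := block_zero _ _ _ hp e1 e2
      refine ⟨v (0, 1), ?_⟩
      ext ⟨i, j⟩
      fin_cases i <;> fin_cases j <;> simp [a3, a4]
      linear_combination -I * e3 - v (1, 1) * hI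
    · rintro ⟨a, rfl⟩
      simp
      constructor
      · linear_combination a * s * hI
      · linear_combination (a * I) * hs
  rw [key]
  apply finrank_span_singleton
  intro h
  simpa using congrFun h (0, 1)

theorem fin1 (b : ℝ) (h : 4 * b ^ 2 = 1) :
    Module.finrank ℂ (LinearMap.ker (MM b).mulVecLin) = 1 := by
  have h' : (b - 1 / 2) * (b + 1 / 2) = 0 := by linarith
  rcases mul_eq_zero.mp h' with h | h
  · obtain rfl : b = 1 / 2 := by linarith
    exact finrank_minus _ 1 (by norm_num) (by push_cast; norm_num) (by push_cast; norm_num)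
  · obtain rfl : b = -1 / 2 := by linarith
    exact finrank_plus _ 1 (by norm_num) (by push_cast; norm_num) (by push_cast; norm_num)

theorem fin9 (b : ℝ) (h : 4 * b ^ 2 = 9) :
    Module.finrank ℂ (LinearMap.ker (MM b).mulVecLin) = 1 := by
  have h' : (b - 3 / 2) * (b + 3 / 2) = 0 := by linarith
  rcases mul_eq_zero.mp h' with h | h
  · obtain rfl : b = 3 / 2 := by linarith
    exact finrank_minus _ (-1) (by norm_num) (by push_cast; norm_num) (by push_cast; norm_num)
  · obtain rfl : b = -3 / 2 := by linarith
    exact finrank_plus _ (-1) (by norm_num) (by push_cast; norm_num) (by push_cast; norm_num)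

/-- The matrix `M(b) = i(3I₄ + γ₋γ₊) + 2b γ₁γ₂` has nonzero kernel iff `4b² = 1` or
`4b² = 9`, and in each of those cases the kernel is 1-dimensional (the case `X₁` of
the Cahen–Wallach reductions). -/
theorem stmt_17 (b : ℝ) :
    (LinearMap.ker (I • ((3 : ℂ) • (1 : Matrix (Fin 2 × Fin 2) (Fin 2 × Fin 2) ℂ)
        + γminus * γplus) + ((2 * b : ℝ) : ℂ) • (γ1 * γ2)).mulVecLin ≠ ⊥ ↔
      4 * b ^ 2 = 1 ∨ 4 * b ^ 2 = 9) ∧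
    (4 * b ^ 2 = 1 →
      Module.finrank ℂ (LinearMap.ker
        (I • ((3 : ℂ) • (1 : Matrix (Fin 2 × Fin 2) (Fin 2 × Fin 2) ℂ)
          + γminus * γplus) + ((2 * b : ℝ) : ℂ) • (γ1 * γ2)).mulVecLin) = 1) ∧
    (4 * b ^ 2 = 9 →
      Module.finrank ℂ (LinearMap.ker
        (I • ((3 : ℂ) • (1 : Matrix (Fin 2 × Fin 2) (Fin 2 × Fin 2) ℂ)
          + γminus * γplus) + ((2 * b : ℝ) : ℂ) • (γ1 * γ2)).mulVecLin) = 1) := by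
  change (LinearMap.ker (MM b).mulVecLin ≠ ⊥ ↔ _) ∧
    (_ → Module.finrank ℂ (LinearMap.ker (MM b).mulVecLin) = 1) ∧
    (_ → Module.finrank ℂ (LinearMap.ker (MM b).mulVecLin) = 1)
  refine ⟨⟨?_, ?_⟩, fin1 b, fin9 b⟩
  · intro h
    by_contra hn
    rw [not_or] at hn
    exact h (ker_bot b hn.1 hn.2)
  · intro h hbot
    have h1 : Module.finrank ℂ (LinearMap.ker (MM b).mulVecLin) = 1 :=
      h.elim (fin1 b) (fin9 b)
    rw [hbot, finrank_bot] at h1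
    exact zero_ne_one h1

end
end

section
/- Let σ₁, σ₂, σ₃ be the Pauli matrices and define the 4×4 complex matrices γ₀ = σ₃ ⊗ I₂, γ₁ = (iσ₂) ⊗ σ₁, γ₃ = (iσ₂) ⊗ σ₃, γ₄ = (iσ₁) ⊗ I₂ (Kronecker products), and set γ₊ = (γ₄ + γ₀)/√2. Let d₁, d₃ ∈ ℝ and suppose it is not the case that d₃ = 0 and 4d₁² = 1. Then the kernel of the matrix ((i + 2d₃)·γ₃ + 2d₁·γ₁)·γ₊ is a 2-dimensional complex subspace of ℂ⁴. In particular (taking d₁ = d₃ = 0) the kernel of γ₃γ₊, and hence of γ₊, is 2-dimensional. -/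
open Matrix Complex
open scoped Kronecker

noncomputable section

theorem mem_ker_γplus (v : Fin 2 × Fin 2 → ℂ) :
    v ∈ LinearMap.ker γplus.mulVecLin ↔ ∀ b, v (0, b) = -I * v (1, b) := by
  have h2 : ((Real.sqrt 2 : ℝ) : ℂ)⁻¹ ≠ 0 := by
    simp
  rw [LinearMap.mem_ker, Matrix.mulVecLin_apply, γplus, Matrix.smul_mulVec,
    smul_eq_zero_iff_right h2]
  have key : ∀ b, ((γ4 + γ0) *ᵥ v) (0, b) = v (0, b) + I * v (1, b) ∧
      ((γ4 + γ0) *ᵥ v) (1, b) = I * v (0, b) - v (1, b) := by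
    intro b
    fin_cases b <;>
      simp [γ4, γ0, σ1, σ3, Matrix.mulVec, dotProduct, Fintype.sum_prod_type,
        Matrix.kroneckerMap_apply, Fin.sum_univ_two] <;> constructor <;> ring
  constructor
  · intro hv b
    have h1 := (key b).1
    rw [hv] at h1
    simp only [Pi.zero_apply] at h1
    linear_combination -h1
  · intro hv
    ext ⟨a, b⟩
    have hI := Complex.I_mul_I
    fin_cases a
    · have h1 := (key b).1
      simp only [Fin.zero_eta, Pi.zero_apply]
      rw [h1, hv b]; ring
    · have h1 := (key b).2
      simp only [Fin.mk_one, Pi.zero_apply]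
      rw [h1, hv b]; linear_combination (-v (1, b)) * hI

/-- The kernel of γ₊ is parametrised by the lower two components. -/
def kerEquiv : LinearMap.ker γplus.mulVecLin ≃ₗ[ℂ] (Fin 2 → ℂ) where
  toFun v := fun b => v.1 (1, b)
  map_add' _ _ := rfl
  map_smul' _ _ := rfl
  invFun w := ⟨fun p => if p.1 = 0 then -I * w p.2 else w p.2, by
    rw [mem_ker_γplus]; intro b; simp⟩
  left_inv v := by
    have hv := (mem_ker_γplus v.1).1 v.2
    ext ⟨a, b⟩
    fin_cases a
    · simp [hv b]
    · simp
  right_inv w := by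
    ext b; simp

theorem finrank_ker_γplus : Module.finrank ℂ (LinearMap.ker γplus.mulVecLin) = 2 := by
  rw [kerEquiv.finrank_eq]; simp

theorem ker_mul_γplus (N : Matrix (Fin 2 × Fin 2) (Fin 2 × Fin 2) ℂ) (s : ℂ) (hs : s ≠ 0)
    (hN : N * N = s • 1) :
    LinearMap.ker (N * γplus).mulVecLin = LinearMap.ker γplus.mulVecLin := by
  ext v
  simp only [LinearMap.mem_ker, Matrix.mulVecLin_apply]
  rw [← Matrix.mulVec_mulVec]
  constructor
  · intro hv
    have h1 : N *ᵥ (N *ᵥ (γplus *ᵥ v)) = 0 := by rw [hv, Matrix.mulVec_zero]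
    rw [Matrix.mulVec_mulVec, hN, Matrix.smul_mulVec, Matrix.one_mulVec,
      smul_eq_zero_iff_right hs] at h1
    exact h1
  · intro hv
    rw [hv, Matrix.mulVec_zero]

theorem sq_comb (a c : ℂ) :
    (a • γ3 + c • γ1) * (a • γ3 + c • γ1) = (-(a ^ 2 + c ^ 2)) • 1 := by
  ext ⟨i, j⟩ ⟨k, l⟩
  fin_cases i <;> fin_cases j <;> fin_cases k <;> fin_cases l <;>
    simp [γ3, γ1, σ1, σ2, σ3, Matrix.mul_apply, Fintype.sum_prod_type,
      Matrix.kroneckerMap_apply, Fin.sum_univ_two, Matrix.one_apply] <;> ring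

/-- Unless `d₃ = 0` and `4d₁² = 1`, the kernel of `((i + 2d₃)γ₃ + 2d₁γ₁)γ₊` is a
2-dimensional complex subspace of `ℂ⁴`; in particular the kernels of `γ₃γ₊` and of
`γ₊` are 2-dimensional (the cases `X₉` and `X₆` of the Cahen–Wallach reductions). -/
theorem stmt_18 (d₁ d₃ : ℝ) (h : ¬(d₃ = 0 ∧ 4 * d₁ ^ 2 = 1)) :
    Module.finrank ℂ (LinearMap.ker
        (((I + ((2 * d₃ : ℝ) : ℂ)) • γ3 + ((2 * d₁ : ℝ) : ℂ) • γ1) * γplus).mulVecLin) = 2 ∧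
    Module.finrank ℂ (LinearMap.ker (γ3 * γplus).mulVecLin) = 2 ∧
    Module.finrank ℂ (LinearMap.ker γplus.mulVecLin) = 2 := by
  refine ⟨?_, ?_, finrank_ker_γplus⟩
  · rw [ker_mul_γplus _ _ _ (sq_comb _ _)]
    · exact finrank_ker_γplus
    · intro h0
      apply h
      have hre := congrArg Complex.re h0
      have him := congrArg Complex.im h0
      simp [pow_two] at hre him
      have h3 : d₃ = 0 := by linarith
      subst h3
      refine ⟨rfl, ?_⟩
      nlinarith
  · have h3 := sq_comb 1 0
    simp only [one_smul, zero_smul, add_zero] at h3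
    rw [ker_mul_γplus _ _ (by norm_num) h3]
    exact finrank_ker_γplus

end
end
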